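/- arXiv:0806.2816 — 5 statements merged into one kernel-verified Lean document; each statement's English description precedes it below -/
import Mathlib

section
/- The model space M^m_w is balanced from below if and only if the quotient q_w/w is non-increasing; precisely, q_w(r) η_w(r) ≥ 1/m holds for all r > 0 if and only if d/dr (q_w(r)/w(r)) ≤ 0 holds for all r > 0. -/
/-!
Write `F r = ∫₀ʳ w^{m-1}`, so that `q / w = F / w^m`, and `F' = w^{m-1}` by the fundamental theorem
of calculus. The quotient rule gives, for `r > 0`,
`(q / w)' = m / w * (1 / m - F * w' / w^m) = m / w * (1 / m - q * η)`,
and `m / w > 0`; hence the two conditions are equivalent at every single `r > 0`.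
-/

/-- The derivative of `q_w / w`, in dimension `m = n + 1`. -/
lemma hasDerivAt_isoperimetric_quotient_div (n : ℕ) (w : ℝ → ℝ) (hw : Differentiable ℝ w)
    (r : ℝ) (hr : 0 < w r) :
    HasDerivAt (fun r => (∫ t in (0:ℝ)..r, w t ^ n) / w r ^ n / w r)
      ((n + 1) / w r *
        (1 / (n + 1) - (∫ t in (0:ℝ)..r, w t ^ n) / w r ^ n * (deriv w r / w r))) r := by
  have hc : Continuous fun t => w t ^ n := hw.continuous.pow n
  have hF : HasDerivAt (fun r => ∫ t in (0:ℝ)..r, w t ^ n) (w r ^ n) r :=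
    intervalIntegral.integral_hasDerivAt_right (hc.intervalIntegrable _ _)
      hc.stronglyMeasurable.stronglyMeasurableAtFilter hc.continuousAt
  have h := hF.div ((hw r).hasDerivAt.pow (n + 1)) (pow_pos hr _).ne'
  have hfun : (fun r => (∫ t in (0:ℝ)..r, w t ^ n) / w r ^ n / w r)
      = (fun r => ∫ t in (0:ℝ)..r, w t ^ n) / w ^ (n + 1) := by
    funext x
    rw [Pi.div_apply, Pi.pow_apply, pow_succ, div_div]
  rw [hfun]
  refine h.congr_deriv ?_
  have hn : (n : ℝ) + 1 ≠ 0 := by positivity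
  rw [Pi.pow_apply, Nat.add_sub_cancel]
  push_cast
  field_simp
  ring

/-- The model space `M^m_w` is balanced from below iff `q_w/w` is non-increasing:
`q_w(r) η_w(r) ≥ 1/m` for all `r > 0` iff `d/dr (q_w(r)/w(r)) ≤ 0` for all `r > 0`. -/
theorem balanced_from_below_iff
    (m : ℕ) (hm : 2 ≤ m) (w : ℝ → ℝ) (hw : ContDiff ℝ (⊤ : ℕ∞) w)
    (hw0 : w 0 = 0) (hw0' : deriv w 0 = 1) (hwpos : ∀ r > (0:ℝ), 0 < w r)
    (q η : ℝ → ℝ)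
    (hq : ∀ r, q r = (∫ t in (0:ℝ)..r, w t ^ (m - 1)) / w r ^ (m - 1))
    (hη : ∀ r, η r = deriv w r / w r) :
    (∀ r > (0:ℝ), q r * η r ≥ 1 / (m : ℝ)) ↔
      (∀ r > (0:ℝ), deriv (fun r => q r / w r) r ≤ 0) := by
  obtain ⟨n, rfl⟩ : ∃ n, m = n + 1 := ⟨m - 1, by omega⟩
  refine forall₂_congr fun r hr => ?_
  have hwr := hwpos r hr
  have hd := hasDerivAt_isoperimetric_quotient_div n w (hw.differentiable (by simp)) r hwr
  simp only [Nat.add_sub_cancel] at hq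
  simp only [← hq, ← hη] at hd
  have hpos : 0 < ((n : ℝ) + 1) / w r := by positivity
  rw [hd.deriv, mul_nonpos_iff_pos_imp_nonpos]
  push_cast
  constructor
  · intro h
    exact ⟨fun _ => by linarith, fun _ => hpos.le⟩
  · intro h
    linarith [h.1 hpos]
end

section
/- Let R > 0. The w-balance condition from below, F(r) (η_w(r) − h(r)) ≥ g(r)/m for all r ∈ (0,R], holds if and only if d/dr ( F(r)/(g(r) w(r)) ) ≤ 0 for all r ∈ (0,R]. (This characterizes when the isoperimetric comparison space C^m_{w,g,h} is w-balanced from below.) -/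
/-!
Write `V(r) = ∫₀ʳ Λ/g` and `A = Λ w g`, so that `F/(g w) = V/A`. By the fundamental theorem of
calculus `V' = Λ/g`, and the differential equation for `Λ` gives
`A' = m (Λ/g) (w' - h w)`. The quotient rule then factors as
`(V/A)' = (Λ w / A²) (Λ/g) (g - m F (η - h))`, whose prefactor is positive for `r > 0`; so the two
conditions are equivalent pointwise.
-/

/-- The `w`-balance condition from below for the isoperimetric comparison space `C^m_{w,g,h}`:
`F(r)(η_w(r) - h(r)) ≥ g(r)/m` on `(0,R]` iff `d/dr (F(r)/(g(r)w(r))) ≤ 0` on `(0,R]`. -/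
theorem w_balanced_from_below_iff
    (m : ℕ) (hm : 2 ≤ m) (w : ℝ → ℝ) (hw : ContDiff ℝ (⊤ : ℕ∞) w)
    (hw0 : w 0 = 0) (hw0' : deriv w 0 = 1) (hwpos : ∀ r > (0:ℝ), 0 < w r)
    (η : ℝ → ℝ) (hη : ∀ r, η r = deriv w r / w r)
    (g h : ℝ → ℝ) (hg : ContDiff ℝ (⊤ : ℕ∞) g) (hh : ContDiff ℝ (⊤ : ℕ∞) h)
    (hgpos : ∀ r ≥ (0:ℝ), 0 < g r) (hgle : ∀ r ≥ (0:ℝ), g r ≤ 1) (hg0 : g 0 = 1)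
    (Λ : ℝ → ℝ) (hΛ : ContDiff ℝ (⊤ : ℕ∞) Λ) (hΛpos : ∀ r > (0:ℝ), 0 < Λ r)
    (hΛode : ∀ r > (0:ℝ),
      deriv (fun r => Λ r * w r * g r) r = m * (Λ r / g r) * (deriv w r - h r * w r))
    (F : ℝ → ℝ) (hF : ∀ r, F r = (∫ t in (0:ℝ)..r, Λ t / g t) / Λ r)
    (R : ℝ) (hR : 0 < R) :
    (∀ r ∈ Set.Ioc (0:ℝ) R, F r * (η r - h r) ≥ g r / m) ↔
      (∀ r ∈ Set.Ioc (0:ℝ) R, deriv (fun r => F r / (g r * w r)) r ≤ 0) := by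
  have hgne : ∀ r ≥ (0:ℝ), g r ≠ 0 := fun r hr => (hgpos r hr).ne'
  have hquot : (fun r => F r / (g r * w r)) =
      fun r => (∫ t in (0:ℝ)..r, Λ t / g t) / (Λ r * w r * g r) := by
    funext r
    rw [hF, div_div]
    congr 1
    ring
  have hV : ∀ r > (0:ℝ), HasDerivAt (fun r => ∫ t in (0:ℝ)..r, Λ t / g t) (Λ r / g r) r := by
    intro r hr
    have hc : ContinuousOn (fun t => Λ t / g t) (Set.Ici 0) :=
      hΛ.continuous.continuousOn.div hg.continuous.continuousOn hgne
    refine intervalIntegral.integral_hasDerivAt_right ?_ ?_ (hc.continuousAt (Ici_mem_nhds hr))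
    · refine (hc.mono ?_).intervalIntegrable
      rw [Set.uIcc_of_le hr.le]
      exact Set.Icc_subset_Ici_self
    · exact (hc.mono Set.Ioi_subset_Ici_self).stronglyMeasurableAtFilter isOpen_Ioi r hr
  refine forall₂_congr fun r hr => ?_
  have hr0 : 0 < r := hr.1
  have hgr := hgpos r hr0.le
  have hwr := hwpos r hr0
  have hΛr := hΛpos r hr0
  have hm0 : (0:ℝ) < m := by exact_mod_cast (by omega : 0 < m)
  have hA : HasDerivAt (fun r => Λ r * w r * g r)
      (m * (Λ r / g r) * (deriv w r - h r * w r)) r := by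
    rw [← hΛode r hr0]
    exact (((hΛ.mul hw).mul hg).differentiable (by simp)).differentiableAt.hasDerivAt
  have hApos : 0 < Λ r * w r * g r := by positivity
  have hderiv : deriv (fun r => F r / (g r * w r)) r =
      (Λ r * w r / (Λ r * w r * g r) ^ 2 * (Λ r / g r)) * (g r - m * (F r * (η r - h r))) := by
    rw [hquot, ((hV r hr0).fun_div hA hApos.ne').deriv, hF, hη]
    field_simp
  have hpre : 0 < Λ r * w r / (Λ r * w r * g r) ^ 2 * (Λ r / g r) := by positivity
  rw [hderiv, ge_iff_le, div_le_iff₀' hm0, ← sub_nonpos]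
  exact ⟨fun H => mul_nonpos_of_nonneg_of_nonpos hpre.le H,
    fun H => nonpos_of_mul_nonpos_right H hpre⟩
end

section
/- Let R > 0 and assume that η_w(r) − h(r) > 0 and that D(r) := m(η_w(r) − h(r)) − g(r)² η_w(r) − g(r) g'(r) > 0 for all r ∈ (0,R]. Then the two conditions [F(r)(η_w(r) − h(r)) ≥ g(r)/m for all r ∈ (0,R]] and [F is non-decreasing on (0,R]] hold simultaneously if and only if g(r)/(m(η_w(r) − h(r))) ≤ F(r) ≤ g(r)/D(r) for all r ∈ (0,R]. (This characterizes when the isoperimetric comparison space C^m_{w,g,h} is w-balanced from below and W-balanced from above.) -/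
/-!
Expanding the differential equation for `Λ w g` and dividing by `Λ w` gives
`g² Λ' = D Λ` with `D = m(η - h) - g² η - g g'`. Together with the fundamental theorem of calculus
this shows that `F = (∫ Λ/g) / Λ` satisfies the linear equation `F' = (g - F D) / g²` on `(0, ∞)`,
so that, where `D > 0`, the inequality `F' ≥ 0` is the upper bound `F ≤ g / D`. The balance
condition is the lower bound after dividing by `η - h > 0`.
-/

/-- The quotient `F = (∫₀ʳ Λ/g) / Λ` satisfies a linear first-order equation as soon as
`g² Λ' = D Λ` at the point `r`. -/
theorem hasDerivAt_quotient {g Λ F : ℝ → ℝ} (hg : ContDiff ℝ (⊤ : ℕ∞) g)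
    (hgpos : ∀ r ≥ (0:ℝ), 0 < g r) (hΛ : ContDiff ℝ (⊤ : ℕ∞) Λ)
    (hF : ∀ r, F r = (∫ t in (0:ℝ)..r, Λ t / g t) / Λ r) {r D : ℝ} (hr : 0 < r)
    (hΛr : 0 < Λ r) (hlog : g r ^ 2 * deriv Λ r = D * Λ r) :
    HasDerivAt F ((g r - F r * D) / g r ^ 2) r := by
  have hgr : 0 < g r := hgpos r hr.le
  -- `g` may vanish on the negative axis, so integrability is only available on `[0, r]`.
  have hint : IntervalIntegrable (fun t => Λ t / g t) MeasureTheory.volume 0 r := by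
    apply ContinuousOn.intervalIntegrable
    rw [Set.uIcc_of_le hr.le]
    exact hΛ.continuous.continuousOn.div hg.continuous.continuousOn
      fun t ht => (hgpos t ht.1).ne'
  have hI : HasDerivAt (fun x => ∫ t in (0:ℝ)..x, Λ t / g t) (Λ r / g r) r :=
    intervalIntegral.integral_hasDerivAt_right hint
      (hΛ.continuous.measurable.div
        hg.continuous.measurable).stronglyMeasurable.stronglyMeasurableAtFilter
      (hΛ.continuous.continuousAt.div hg.continuous.continuousAt hgr.ne')
  have hΛd : HasDerivAt Λ (deriv Λ r) r := (hΛ.differentiable (by simp) r).hasDerivAt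
  have hΛ' : deriv Λ r = D * Λ r / g r ^ 2 := by
    rw [eq_div_iff (by positivity), ← hlog]; ring
  have key := hI.div hΛd hΛr.ne'
  rw [show F = fun x => (∫ t in (0:ℝ)..x, Λ t / g t) / Λ x from funext hF]
  refine key.congr_deriv ?_
  rw [hΛ']
  field_simp

/-- Characterization of when the isoperimetric comparison space `C^m_{w,g,h}` is `w`-balanced from
below and `W`-balanced from above: assuming `η_w - h > 0` and
`D(r) = m(η_w(r) - h(r)) - g(r)² η_w(r) - g(r) g'(r) > 0` on `(0,R]`, the balance condition
`F(r)(η_w(r) - h(r)) ≥ g(r)/m` together with `F` non-decreasing holds iff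
`g(r)/(m(η_w(r) - h(r))) ≤ F(r) ≤ g(r)/D(r)` on `(0,R]`. -/
theorem doubly_balanced_iff
    (m : ℕ) (hm : 2 ≤ m) (w : ℝ → ℝ) (hw : ContDiff ℝ (⊤ : ℕ∞) w)
    (hw0 : w 0 = 0) (hw0' : deriv w 0 = 1) (hwpos : ∀ r > (0:ℝ), 0 < w r)
    (η : ℝ → ℝ) (hη : ∀ r, η r = deriv w r / w r)
    (g h : ℝ → ℝ) (hg : ContDiff ℝ (⊤ : ℕ∞) g) (hh : ContDiff ℝ (⊤ : ℕ∞) h)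
    (hgpos : ∀ r ≥ (0:ℝ), 0 < g r) (hgle : ∀ r ≥ (0:ℝ), g r ≤ 1) (hg0 : g 0 = 1)
    (Λ : ℝ → ℝ) (hΛ : ContDiff ℝ (⊤ : ℕ∞) Λ) (hΛpos : ∀ r > (0:ℝ), 0 < Λ r)
    (hΛode : ∀ r > (0:ℝ),
      deriv (fun r => Λ r * w r * g r) r = m * (Λ r / g r) * (deriv w r - h r * w r))
    (F : ℝ → ℝ) (hF : ∀ r, F r = (∫ t in (0:ℝ)..r, Λ t / g t) / Λ r)
    (R : ℝ) (hR : 0 < R)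
    (hconvex : ∀ r ∈ Set.Ioc (0:ℝ) R, η r - h r > 0)
    (hD : ∀ r ∈ Set.Ioc (0:ℝ) R,
      m * (η r - h r) - g r ^ 2 * η r - g r * deriv g r > 0) :
    ((∀ r ∈ Set.Ioc (0:ℝ) R, F r * (η r - h r) ≥ g r / m)
        ∧ MonotoneOn F (Set.Ioc (0:ℝ) R)) ↔
      (∀ r ∈ Set.Ioc (0:ℝ) R,
        g r / (m * (η r - h r)) ≤ F r
          ∧ F r ≤ g r / (m * (η r - h r) - g r ^ 2 * η r - g r * deriv g r)) := by
  have hFd : ∀ r ∈ Set.Ioc (0:ℝ) R, HasDerivAt F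
      ((g r - F r * (m * (η r - h r) - g r ^ 2 * η r - g r * deriv g r)) / g r ^ 2) r := by
    intro r hr
    have hwr := hwpos r hr.1
    have hΛr := hΛpos r hr.1
    have hgr := hgpos r hr.1.le
    refine hasDerivAt_quotient hg hgpos hΛ hF hr.1 hΛr ?_
    have dΛ : HasDerivAt Λ (deriv Λ r) r := (hΛ.differentiable (by simp) r).hasDerivAt
    have dw : HasDerivAt w (deriv w r) r := (hw.differentiable (by simp) r).hasDerivAt
    have dg : HasDerivAt g (deriv g r) r := (hg.differentiable (by simp) r).hasDerivAt
    have hprod : deriv (fun r => Λ r * w r * g r) r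
        = (deriv Λ r * w r + Λ r * deriv w r) * g r + Λ r * w r * deriv g r :=
      ((dΛ.mul dw).mul dg).deriv
    have ode := hΛode r hr.1
    rw [hprod] at ode
    rw [hη r]
    field_simp at ode ⊢
    linear_combination ode
  have hsign : ∀ r ∈ Set.Ioc (0:ℝ) R,
      (0 ≤ (g r - F r * (m * (η r - h r) - g r ^ 2 * η r - g r * deriv g r)) / g r ^ 2 ↔
        F r ≤ g r / (m * (η r - h r) - g r ^ 2 * η r - g r * deriv g r)) := by
    intro r hr
    have hgr := hgpos r hr.1.le
    rw [le_div_iff₀ (hD r hr), le_div_iff₀ (by positivity), zero_mul, sub_nonneg]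
  have hbal : ∀ r ∈ Set.Ioc (0:ℝ) R,
      (F r * (η r - h r) ≥ g r / m ↔ g r / (m * (η r - h r)) ≤ F r) := by
    intro r hr
    rw [← div_div, div_le_iff₀ (hconvex r hr)]
  have hmono : MonotoneOn F (Set.Ioc (0:ℝ) R) ↔ ∀ r ∈ Set.Ioc (0:ℝ) R,
      F r ≤ g r / (m * (η r - h r) - g r ^ 2 * η r - g r * deriv g r) := by
    constructor
    · intro hmon r hr
      rw [← hsign r hr]
      -- At the endpoint `R` only the one-sided derivative is controlled by monotonicity;
      -- it equals the two-sided one because `F` is differentiable there.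
      have huniq : UniqueDiffWithinAt ℝ (Set.Ioc (0:ℝ) R) r := uniqueDiffOn_Ioc 0 R r hr
      rw [← (hFd r hr).hasDerivWithinAt.derivWithin huniq]
      exact hmon.derivWithin_nonneg
    · intro hup
      refine monotoneOn_of_deriv_nonneg (convex_Ioc 0 R)
        (fun r hr => (hFd r hr).continuousAt.continuousWithinAt)
        (fun r hr => (hFd r (interior_subset hr)).differentiableAt.differentiableWithinAt) ?_
      intro r hr
      have hr' := interior_subset hr
      rw [(hFd r hr').deriv]
      exact (hsign r hr').2 (hup r hr')
  rw [hmono, ← forall₂_and]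
  exact forall₂_congr fun r hr => and_congr_left' (hbal r hr)
end

section
/- Let R > 0 and define ψ(r) = ∫_r^R (1/(g(u) Λ(u))) (∫_0^u Λ(t)/g(t) dt) du for r ∈ [0,R]. Then ψ'(r) = −F(r)/g(r) for r ∈ (0,R), ψ(R) = 0, and ψ solves the Dirichlet–Poisson problem for the operator L: g(r)² ψ''(r) + ψ'(r) ( (m − g(r)²) η_w(r) − m h(r) ) = −1 for all r ∈ (0,R). -/
/-!
Write `I(r) = ∫_0^r Λ/g`. The quotient `Λ/g` is continuous on `[0, ∞)`, so the fundamental theorem of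
calculus gives `I' = Λ/g` on `(0, ∞)` (`hasDerivAt_integral_ratio`), and then
`ψ' = -I/(gΛ) = -F/g` there: near `r > 0` the outer integral stays away from the possible zero
of `Λ` at the origin. By the quotient rule,
`g² ψ'' = -1 + I (gΛ)'/Λ²`. Expanding the differential equation for `Λ w g` and dividing by `w`
yields `(gΛ)' = (Λ/g) ((m - g²) η_w - m h)`, so the second term equals
`(I/(gΛ)) ((m - g²) η_w - m h)`, which cancels against the first-order term of `L ψ`.
-/

open Set Filter Topology

theorem hasDerivAt_integral_ratio {Λ g : ℝ → ℝ} (hΛ : Continuous Λ) (hg : Continuous g)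
    (hgpos : ∀ r ≥ (0:ℝ), 0 < g r) {r : ℝ} (hr : 0 < r) :
    HasDerivAt (fun u => ∫ t in (0:ℝ)..u, Λ t / g t) (Λ r / g r) r := by
  have hc : ContinuousOn (fun t => Λ t / g t) (Ici 0) :=
    hΛ.continuousOn.div hg.continuousOn fun t ht => (hgpos t ht).ne'
  refine intervalIntegral.integral_hasDerivAt_right ?_ ?_ (hc.continuousAt (Ici_mem_nhds hr))
  · refine (hc.mono fun t ht => ?_).intervalIntegrable
    rw [uIcc_of_le hr.le] at ht
    exact ht.1
  · exact (hc.mono Ioi_subset_Ici_self).stronglyMeasurableAtFilter isOpen_Ioi r hr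


/-- The function `ψ(r) = ∫_r^R (1/(g Λ))(u) (∫_0^u Λ/g) du` satisfies `ψ'(r) = -F(r)/g(r)`,
`ψ(R) = 0`, and solves the Dirichlet–Poisson problem `L ψ = -1` on `(0,R)`, where
`L f = g² f'' + f'((m - g²) η_w - m h)`. -/
theorem transplanted_solution_poisson
    (m : ℕ) (hm : 2 ≤ m) (w : ℝ → ℝ) (hw : ContDiff ℝ (⊤ : ℕ∞) w)
    (hw0 : w 0 = 0) (hw0' : deriv w 0 = 1) (hwpos : ∀ r > (0:ℝ), 0 < w r)
    (η : ℝ → ℝ) (hη : ∀ r, η r = deriv w r / w r)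
    (g h : ℝ → ℝ) (hg : ContDiff ℝ (⊤ : ℕ∞) g) (hh : ContDiff ℝ (⊤ : ℕ∞) h)
    (hgpos : ∀ r ≥ (0:ℝ), 0 < g r) (hgle : ∀ r ≥ (0:ℝ), g r ≤ 1) (hg0 : g 0 = 1)
    (Λ : ℝ → ℝ) (hΛ : ContDiff ℝ (⊤ : ℕ∞) Λ) (hΛpos : ∀ r > (0:ℝ), 0 < Λ r)
    (hΛode : ∀ r > (0:ℝ),
      deriv (fun r => Λ r * w r * g r) r = m * (Λ r / g r) * (deriv w r - h r * w r))
    (F : ℝ → ℝ) (hF : ∀ r, F r = (∫ t in (0:ℝ)..r, Λ t / g t) / Λ r)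
    (R : ℝ) (hR : 0 < R)
    (ψ : ℝ → ℝ)
    (hψ : ∀ r, ψ r = ∫ u in r..R, (1 / (g u * Λ u)) * ∫ t in (0:ℝ)..u, Λ t / g t) :
    (∀ r ∈ Set.Ioo (0:ℝ) R, deriv ψ r = -F r / g r)
    ∧ ψ R = 0
    ∧ (∀ r ∈ Set.Ioo (0:ℝ) R,
        g r ^ 2 * deriv (deriv ψ) r
          + deriv ψ r * (((m : ℝ) - g r ^ 2) * η r - m * h r) = -1) := by
  have hΛc := hΛ.continuous
  have hgc := hg.continuous
  set I : ℝ → ℝ := fun u => ∫ t in (0:ℝ)..u, Λ t / g t with hI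
  have hID : ∀ r > (0:ℝ), HasDerivAt I (Λ r / g r) r := fun r hr =>
    hasDerivAt_integral_ratio hΛc hgc hgpos hr
  have hne : ∀ r > (0:ℝ), g r * Λ r ≠ 0 := fun r hr =>
    (mul_pos (hgpos r hr.le) (hΛpos r hr)).ne'
  have hkc : ContinuousOn (fun u => 1 / (g u * Λ u) * I u) (Ioi 0) :=
    (continuousOn_const.div (hgc.mul hΛc).continuousOn hne).mul
      fun r hr => (hID r hr).continuousAt.continuousWithinAt
  have hψD : ∀ r > (0:ℝ), HasDerivAt ψ (-(1 / (g r * Λ r) * I r)) r := by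
    intro r hr
    have hψ' : ψ = fun r => ∫ u in r..R, 1 / (g u * Λ u) * I u := funext hψ
    rw [hψ']
    refine intervalIntegral.integral_hasDerivAt_left ?_ ?_ (hkc.continuousAt (Ioi_mem_nhds hr))
    · refine (hkc.mono fun t ht => ?_).intervalIntegrable
      exact (lt_min hr hR).trans_le ht.1
    · exact hkc.stronglyMeasurableAtFilter isOpen_Ioi r hr
  refine ⟨fun r hr => ?_, by rw [hψ, intervalIntegral.integral_same], fun r hr => ?_⟩
  · have h1 := (hgpos r hr.1.le).ne'
    have h2 := (hΛpos r hr.1).ne'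
    rw [(hψD r hr.1).deriv, hF]
    change _ = -(I r / Λ r) / g r
    field_simp
  · have hr0 := hr.1
    have h1 := (hgpos r hr0.le).ne'
    have h2 := (hΛpos r hr0).ne'
    have h3 := (hwpos r hr0).ne'
    have hgD : HasDerivAt g (deriv g r) r := (hg.differentiable (by simp) r).hasDerivAt
    have hΛD : HasDerivAt Λ (deriv Λ r) r := (hΛ.differentiable (by simp) r).hasDerivAt
    have hwD : HasDerivAt w (deriv w r) r := (hw.differentiable (by simp) r).hasDerivAt
    have hode : (deriv Λ r * w r + Λ r * deriv w r) * g r + Λ r * w r * deriv g r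
        = m * (Λ r / g r) * (deriv w r - h r * w r) :=
      ((hΛD.mul hwD).mul hgD).deriv.symm.trans (hΛode r hr0)
    have hev : deriv ψ =ᶠ[𝓝 r] fun u => -(I u / (g u * Λ u)) := by
      filter_upwards [Ioi_mem_nhds hr0] with u hu
      rw [(hψD u hu).deriv, one_div_mul_eq_div]
    have hψ2 : deriv (deriv ψ) r = -((Λ r / g r * (g r * Λ r)
        - I r * (deriv g r * Λ r + g r * deriv Λ r)) / (g r * Λ r) ^ 2) :=
      hev.deriv_eq.trans ((hID r hr0).div (hgD.mul hΛD) (hne r hr0)).neg.deriv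
    -- the differential equation for `Λ w g`, solved for `(gΛ)'`
    have hgΛ : deriv g r * Λ r + g r * deriv Λ r
        = Λ r / g r * (((m : ℝ) - g r ^ 2) * η r - m * h r) := by
      rw [hη]
      field_simp at hode ⊢
      linear_combination hode
    rw [hψ2, hev.self_of_nhds, hgΛ]
    field_simp
    ring
end

section
/- Let R > 0 and let ψ(r) = ∫_r^R (1/(g(u) Λ(u))) (∫_0^u Λ(t)/g(t) dt) du, so that ψ solves L ψ = −1 on (0,R) with ψ(R) = 0. If the w-balance condition from below F(r)(η_w(r) − h(r)) ≥ g(r)/m holds for all r ∈ (0,R), then ψ''(r) − ψ'(r) η_w(r) ≥ 0 for all r ∈ (0,R). -/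
/-!
Put `I(r) = ∫₀ʳ Λ/g` and `P = g Λ`. By the fundamental theorem of calculus `ψ' = -I/P` on `(0, ∞)`,
hence `ψ'' = -1/g² + I P'/P²`. The equation for `(Λ w g)'`, divided by `w`, reads
`P' = m (Λ/g) (η_w - h) - P η_w`, so the terms in `η_w` alone cancel and
`ψ'' - ψ' η_w = (m F (η_w - h) - g) / g³`,
which is nonnegative exactly when the balance condition holds.
-/

open Set in
/-- The derivative of the inner integral `I`. It is taken at `r > 0` only, since `g` may vanish
on the negative half-line. -/
theorem hasDerivAt_inner_integral {g Λ : ℝ → ℝ} (hg : Continuous g) (hΛ : Continuous Λ)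
    (hgpos : ∀ r ≥ (0:ℝ), 0 < g r) {r : ℝ} (hr : 0 < r) :
    HasDerivAt (fun u => ∫ t in (0:ℝ)..u, Λ t / g t) (Λ r / g r) r := by
  refine intervalIntegral.integral_hasDerivAt_right ?_ ?_ ?_
  · refine ContinuousOn.intervalIntegrable (hΛ.continuousOn.div hg.continuousOn ?_)
    intro x hx
    rw [uIcc_of_le hr.le] at hx
    exact (hgpos x hx.1).ne'
  · exact (hΛ.measurable.div hg.measurable).stronglyMeasurable.stronglyMeasurableAtFilter
  · exact hΛ.continuousAt.div hg.continuousAt (hgpos r hr.le).ne'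

open Set in
/-- The derivative of `r ↦ ∫_r^R f` at points of `(0, ∞)`, for `f` continuous there. -/
theorem hasDerivAt_integral_left_of_continuousOn_Ioi {f : ℝ → ℝ} (hf : ContinuousOn f (Ioi 0))
    {r R : ℝ} (hr : 0 < r) (hR : 0 < R) :
    HasDerivAt (fun u => ∫ t in u..R, f t) (-f r) r := by
  refine intervalIntegral.integral_hasDerivAt_left ?_ ?_ ?_
  · refine (hf.mono ?_).intervalIntegrable
    intro x hx
    exact lt_of_lt_of_le (lt_min hr hR) hx.1
  · exact hf.stronglyMeasurableAtFilter isOpen_Ioi r hr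
  · exact hf.continuousAt (Ioi_mem_nhds hr)


/-- If the `w`-balance condition from below `F(r)(η_w(r) - h(r)) ≥ g(r)/m` holds on `(0,R)`,
then the solution `ψ` of `L ψ = -1`, `ψ(R) = 0` satisfies `ψ''(r) - ψ'(r) η_w(r) ≥ 0`
on `(0,R)`. -/
theorem balance_implies_convexity_inequality
    (m : ℕ) (hm : 2 ≤ m) (w : ℝ → ℝ) (hw : ContDiff ℝ (⊤ : ℕ∞) w)
    (hw0 : w 0 = 0) (hw0' : deriv w 0 = 1) (hwpos : ∀ r > (0:ℝ), 0 < w r)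
    (η : ℝ → ℝ) (hη : ∀ r, η r = deriv w r / w r)
    (g h : ℝ → ℝ) (hg : ContDiff ℝ (⊤ : ℕ∞) g) (hh : ContDiff ℝ (⊤ : ℕ∞) h)
    (hgpos : ∀ r ≥ (0:ℝ), 0 < g r) (hgle : ∀ r ≥ (0:ℝ), g r ≤ 1) (hg0 : g 0 = 1)
    (Λ : ℝ → ℝ) (hΛ : ContDiff ℝ (⊤ : ℕ∞) Λ) (hΛpos : ∀ r > (0:ℝ), 0 < Λ r)
    (hΛode : ∀ r > (0:ℝ),
      deriv (fun r => Λ r * w r * g r) r = m * (Λ r / g r) * (deriv w r - h r * w r))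
    (F : ℝ → ℝ) (hF : ∀ r, F r = (∫ t in (0:ℝ)..r, Λ t / g t) / Λ r)
    (R : ℝ) (hR : 0 < R)
    (ψ : ℝ → ℝ)
    (hψ : ∀ r, ψ r = ∫ u in r..R, (1 / (g u * Λ u)) * ∫ t in (0:ℝ)..u, Λ t / g t)
    (hbalance : ∀ r ∈ Set.Ioo (0:ℝ) R, F r * (η r - h r) ≥ g r / m) :
    ∀ r ∈ Set.Ioo (0:ℝ) R, deriv (deriv ψ) r - deriv ψ r * η r ≥ 0 := by
  intro r hr
  have hr0 : 0 < r := hr.1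
  set I : ℝ → ℝ := fun u => ∫ t in (0:ℝ)..u, Λ t / g t with hI
  have hId : ∀ u > (0:ℝ), HasDerivAt I (Λ u / g u) u := fun u hu =>
    hasDerivAt_inner_integral hg.continuous hΛ.continuous hgpos hu
  have hcont : ContinuousOn (fun u => (1 / (g u * Λ u)) * I u) (Set.Ioi 0) := by
    intro u hu
    have hne : g u * Λ u ≠ 0 := (mul_pos (hgpos u (le_of_lt hu)) (hΛpos u hu)).ne'
    exact ((continuousAt_const.div (hg.continuous.continuousAt.mul hΛ.continuous.continuousAt)
      hne).mul (hId u hu).continuousAt).continuousWithinAt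
  have hψd : ∀ u > (0:ℝ), deriv ψ u = -I u / (g u * Λ u) := by
    intro u hu
    rw [funext hψ, (hasDerivAt_integral_left_of_continuousOn_Ioi hcont hu hR).deriv]
    ring
  have hg' : HasDerivAt g (deriv g r) r := (hg.differentiable (by simp) r).hasDerivAt
  have hΛ' : HasDerivAt Λ (deriv Λ r) r := (hΛ.differentiable (by simp) r).hasDerivAt
  have hw' : HasDerivAt w (deriv w r) r := (hw.differentiable (by simp) r).hasDerivAt
  have hgr := hgpos r hr0.le
  have hΛr := hΛpos r hr0
  have hwr := hwpos r hr0
  have hψdd : deriv (deriv ψ) r = (-(Λ r / g r) * (g r * Λ r)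
      - -I r * (deriv g r * Λ r + g r * deriv Λ r)) / (g r * Λ r) ^ 2 := by
    have hev : deriv ψ =ᶠ[nhds r] fun u => -I u / (g u * Λ u) := by
      filter_upwards [Ioi_mem_nhds hr0] with u hu using hψd u hu
    rw [hev.deriv_eq]
    exact ((hId r hr0).neg.div (hg'.mul hΛ') (mul_pos hgr hΛr).ne').deriv
  have hode := hΛode r hr0
  have hprod : deriv (fun r => Λ r * w r * g r) r =
      (deriv Λ r * w r + Λ r * deriv w r) * g r + Λ r * w r * deriv g r :=
    ((hΛ'.mul hw').mul hg').deriv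
  rw [hprod] at hode
  have hP' : deriv g r * Λ r + g r * deriv Λ r =
      m * (Λ r / g r) * (η r - h r) - g r * Λ r * η r := by
    rw [hη]
    field_simp at hode ⊢
    linear_combination hode
  have hm0 : (0:ℝ) < m := by exact_mod_cast (by omega : 0 < m)
  have hb := hbalance r hr
  rw [hF, ge_iff_le, div_le_iff₀ hm0] at hb
  have key : deriv (deriv ψ) r - deriv ψ r * η r =
      (I r / Λ r * (η r - h r) * m - g r) / g r ^ 3 := by
    rw [hψdd, hψd r hr0, hP']
    field_simp
    ring
  rw [key]
  exact div_nonneg (sub_nonneg.2 hb) (pow_pos hgr 3).le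
end
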